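/- arXiv:1805.06728 — 4 statements merged into one kernel-verified Lean document; each statement's English description precedes it below -/
import Mathlib

section
/- There exists n₀ > 0 such that for all natural numbers n ≥ n₀ and all real numbers c with 0 < c < n/7, one has (n − c)·(1 − (1 − 1/n)^{c/2}) > c/3. -/
open Real

theorem stmt_0 :
    ∃ n₀ : ℕ, 0 < n₀ ∧ ∀ n : ℕ, n₀ ≤ n → ∀ c : ℝ, 0 < c → c < (n : ℝ) / 7 →
      ((n : ℝ) - c) * (1 - (1 - 1 / (n : ℝ)) ^ (c / 2)) > c / 3 := by
  refine ⟨2, by norm_num, fun n hn c hc hcn => ?_⟩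
  have hn2 : (2 : ℝ) ≤ n := by exact_mod_cast hn
  have hn0 : (0 : ℝ) < n := by linarith
  have hb : (0 : ℝ) ≤ 1 - 1 / (n : ℝ) := by
    rw [sub_nonneg, div_le_one hn0]; linarith
  have h1 : (1 - 1 / (n : ℝ)) ^ (c / 2) ≤ Real.exp (-(1 / (n : ℝ))) ^ (c / 2) := by
    apply Real.rpow_le_rpow hb _ (by linarith)
    have := Real.add_one_le_exp (-(1 / (n : ℝ)))
    linarith
  have h2 : Real.exp (-(1 / (n : ℝ))) ^ (c / 2) = (Real.exp (c / (2 * n)))⁻¹ := by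
    rw [← Real.exp_mul, ← Real.exp_neg]
    congr 1
    field_simp
  have h3 : (Real.exp (c / (2 * n)))⁻¹ ≤ (c / (2 * n) + 1)⁻¹ := by
    apply inv_anti₀ (by positivity) (Real.add_one_le_exp _)
  have h4 : (c / (2 * (n : ℝ)) + 1)⁻¹ = 1 - c / (2 * n + c) := by
    have : (2 * (n : ℝ) + c) ≠ 0 := by positivity
    have : (c + 2 * (n : ℝ)) ≠ 0 := by positivity
    field_simp
    ring
  have h5 : c / (2 * n + c) ≤ 1 - (1 - 1 / (n : ℝ)) ^ (c / 2) := by linarith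
  have h6 : ((n : ℝ) - c) * (c / (2 * n + c)) > c / 3 := by
    rw [gt_iff_lt, mul_div_assoc', div_lt_div_iff₀ (by norm_num) (by positivity)]
    nlinarith
  exact lt_of_lt_of_le h6 (mul_le_mul_of_nonneg_left h5 (by linarith))
end

section
/- Let γ > 0 and α, β > 1 be real constants, and for each natural number n ≥ 2 let q_n be a real number with log n/(γ·n) ≤ q_n ≤ 1. Then lim_{n→∞} (1 − (1 − q_n)^{n − β·log n})^{α·log n} = 1. -/
open Real Filter

theorem stmt_1 (γ α β : ℝ) (hγ : 0 < γ) (hα : 1 < α) (hβ : 1 < β)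
    (q : ℕ → ℝ)
    (hq : ∀ n : ℕ, 2 ≤ n → Real.log n / (γ * n) ≤ q n ∧ q n ≤ 1) :
    Tendsto (fun n : ℕ =>
        (1 - (1 - q n) ^ ((n : ℝ) - β * Real.log n)) ^ (α * Real.log n))
      atTop (nhds 1) := by
  have hlog : Tendsto (fun n : ℕ => Real.log (n : ℝ)) atTop atTop :=
    Real.tendsto_log_atTop.comp tendsto_natCast_atTop_atTop
  have hlim : Tendsto (fun n : ℕ => 1 - α * (Real.log n * Real.exp (-(1 / (2 * γ)) * Real.log n)))
      atTop (nhds 1) := by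
    have h1 := tendsto_rpow_mul_exp_neg_mul_atTop_nhds_zero 1 (1 / (2 * γ)) (by positivity)
    have h2 := ((h1.comp hlog).const_mul α).const_sub 1
    simpa using h2
  have hsmall : ∀ᶠ n : ℕ in atTop, β * Real.log n ≤ n / 2 := by
    have h1 := (Real.isLittleO_log_id_atTop.comp_tendsto
      (tendsto_natCast_atTop_atTop (R := ℝ))).def (c := 1 / (2 * β)) (by positivity)
    filter_upwards [h1] with n hn
    simp only [Function.comp, id, Real.norm_eq_abs, Nat.abs_cast] at hn
    have h3 := (le_abs_self _).trans hn
    have : β * Real.log n ≤ β * (1 / (2 * β) * n) := by gcongr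
    have e : β * (1 / (2 * β) * n) = (n : ℝ) / 2 := by field_simp
    linarith
  have key : ∀ᶠ n : ℕ in atTop,
      1 - α * (Real.log n * Real.exp (-(1 / (2 * γ)) * Real.log n)) ≤
        (1 - (1 - q n) ^ ((n : ℝ) - β * Real.log n)) ^ (α * Real.log n) ∧
      (1 - (1 - q n) ^ ((n : ℝ) - β * Real.log n)) ^ (α * Real.log n) ≤ 1 := by
    filter_upwards [hsmall, hlog.eventually_ge_atTop 1, eventually_ge_atTop 2] with n hs hL hn
    obtain ⟨hq1, hq2⟩ := hq n hn
    have hn0 : (0 : ℝ) < n := by positivity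
    set L := Real.log (n : ℝ) with hLdef
    have hq0 : 0 ≤ q n := le_trans (by positivity) hq1
    have hm : (n : ℝ) / 2 ≤ n - β * L := by linarith
    set m := (n : ℝ) - β * L
    have hm0 : 0 ≤ m := le_trans (by positivity) hm
    have hx0 : 0 ≤ (1 - q n) ^ m := Real.rpow_nonneg (by linarith) _
    have hx1 : (1 - q n) ^ m ≤ 1 := Real.rpow_le_one (by linarith) (by linarith) hm0
    have hx2 : (1 - q n) ^ m ≤ Real.exp (-(1 / (2 * γ)) * L) := by
      calc (1 - q n) ^ m ≤ (Real.exp (-q n)) ^ m :=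
            Real.rpow_le_rpow (by linarith) (Real.one_sub_le_exp_neg _) hm0
        _ = Real.exp (-q n * m) := (Real.exp_mul _ _).symm
        _ ≤ _ := by
          apply Real.exp_le_exp.mpr
          have h : L / (γ * n) * (n / 2) ≤ q n * m := by gcongr
          have e : L / (γ * n) * (n / 2) = 1 / (2 * γ) * L := by field_simp
          linarith
    set x := (1 - q n) ^ m
    have hp : 1 ≤ α * L := by nlinarith
    have hb := one_add_mul_self_le_rpow_one_add (s := -x) (by linarith) hp
    rw [← sub_eq_add_neg] at hb
    constructor
    · have : α * L * x ≤ α * L * Real.exp (-(1 / (2 * γ)) * L) := by gcongr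
      linarith
    · exact Real.rpow_le_one (by linarith) (by linarith) (by linarith)
  exact tendsto_of_tendsto_of_tendsto_of_le_of_le' hlim tendsto_const_nhds
    (key.mono fun _ h => h.1) (key.mono fun _ h => h.2)
end

section
/- Let γ > 0 be a real constant, and for each natural number n (large enough that n − 3·log n > 0) set X_n = (1 − √(2·√n/(n − 3·log n)))·(n − 3·log n)·√(log n)/(γ·√n). Then lim_{n→∞} log n · (1 − (1/γ)·√(log n/n))^{X_n²·√(log n)/(2·√n)} = 0. -/
open Real Filter

theorem stmt_2 (γ : ℝ) (hγ : 0 < γ)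
    (X : ℕ → ℝ)
    (hX : ∀ n : ℕ, X n =
      (1 - Real.sqrt (2 * Real.sqrt n / ((n : ℝ) - 3 * Real.log n))) *
        ((n : ℝ) - 3 * Real.log n) * Real.sqrt (Real.log n) / (γ * Real.sqrt n)) :
    Tendsto (fun n : ℕ =>
        Real.log n *
          (1 - (1 / γ) * Real.sqrt (Real.log n / n)) ^
            ((X n) ^ 2 * Real.sqrt (Real.log n) / (2 * Real.sqrt n)))
      atTop (nhds 0) := by
  have hlog : Tendsto (fun n : ℕ => Real.log n) atTop atTop :=
    Real.tendsto_log_atTop.comp tendsto_natCast_atTop_atTop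
  have hlo : ∀ c : ℝ, 0 < c → ∀ᶠ n : ℕ in atTop, Real.log n ≤ c * n := by
    intro c hc
    have h := (Real.isLittleO_log_id_atTop.def hc)
    have h2 := tendsto_natCast_atTop_atTop (R := ℝ) |>.eventually h
    filter_upwards [h2] with n hn
    have h3 := le_trans (le_abs_self _) hn
    simpa using h3
  have hlim : Tendsto (fun n : ℕ => (32 * γ ^ 3) * (Real.log n)⁻¹) atTop (nhds 0) := by
    simpa using (hlog.inv_tendsto_atTop).const_mul (32 * γ ^ 3)
  have key : ∀ᶠ n : ℕ in atTop, 0 ≤ Real.log n *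
          (1 - (1 / γ) * Real.sqrt (Real.log n / n)) ^
            ((X n) ^ 2 * Real.sqrt (Real.log n) / (2 * Real.sqrt n)) ∧
      Real.log n *
          (1 - (1 / γ) * Real.sqrt (Real.log n / n)) ^
            ((X n) ^ 2 * Real.sqrt (Real.log n) / (2 * Real.sqrt n)) ≤
        (32 * γ ^ 3) * (Real.log n)⁻¹ := by
    filter_upwards [hlo (1/12) (by norm_num), hlo (γ^2) (by positivity),
      hlog.eventually_ge_atTop 1, eventually_ge_atTop 256] with n h1 h2 h3 h4
    have hn : (256 : ℝ) ≤ n := by exact_mod_cast h4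
    rw [hX n, Real.sqrt_div (by linarith)]
    have hs16 : (16 : ℝ) ≤ √(n : ℝ) := Real.le_sqrt_of_sq_le (by linarith)
    have hs2 : √(n : ℝ) ^ 2 = n := Real.sq_sqrt (by linarith)
    have ht1 : (1 : ℝ) ≤ √(Real.log n) := Real.le_sqrt_of_sq_le (by linarith)
    have ht2 : √(Real.log n) ^ 2 = Real.log n := Real.sq_sqrt (by linarith)
    have hq : √(2 * √(n : ℝ) / ((n : ℝ) - 3 * Real.log n)) ≤ 1 / 2 := by
      rw [Real.sqrt_le_left (by norm_num), div_le_iff₀ (by linarith)]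
      nlinarith
    have hfac : (n : ℝ) / 4 ≤ (1 - √(2 * √(n : ℝ) / ((n : ℝ) - 3 * Real.log n))) *
        ((n : ℝ) - 3 * Real.log n) := by nlinarith
    generalize (1 - √(2 * √(n : ℝ) / ((n : ℝ) - 3 * Real.log n))) *
        ((n : ℝ) - 3 * Real.log n) = F at *
    generalize √(n : ℝ) = s at *
    generalize √(Real.log n) = t at *
    generalize Real.log n = L at *
    generalize (n : ℝ) = N at *
    subst hs2 ht2
    have hs : 0 < s := by linarith
    have ht : 0 < t := by linarith
    have hts : t ≤ γ * s := by
      refine (pow_le_pow_iff_left₀ ht.le (by positivity) two_ne_zero).1 ?_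
      nlinarith
    have hu : 1 / γ * (t / s) ≤ 1 := by
      rw [div_mul_div_comm, one_mul, div_le_one (by positivity)]; exact hts
    have hb0 : 0 ≤ 1 - 1 / γ * (t / s) := by linarith
    have hXl : s * t / (4 * γ) ≤ F * t / (γ * s) := by
      have : s * t / (4 * γ) = (s ^ 2 / 4) * t / (γ * s) := by field_simp
      rw [this]; gcongr
    have hE : s * t ^ 3 / (32 * γ ^ 2) ≤ (F * t / (γ * s)) ^ 2 * t / (2 * s) := by
      have : s * t ^ 3 / (32 * γ ^ 2) = (s * t / (4 * γ)) ^ 2 * t / (2 * s) := by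
        field_simp; norm_num
      rw [this]; gcongr
    have hE0 : 0 ≤ (F * t / (γ * s)) ^ 2 * t / (2 * s) := by positivity
    generalize (F * t / (γ * s)) ^ 2 * t / (2 * s) = E at *
    refine ⟨mul_nonneg (by positivity) (Real.rpow_nonneg hb0 _), ?_⟩
    have hb1 : 1 - 1 / γ * (t / s) ≤ Real.exp (-(1 / γ * (t / s))) :=
      Real.one_sub_le_exp_neg _
    have hp : (1 - 1 / γ * (t / s)) ^ E ≤ Real.exp (-(t ^ 4 / (32 * γ ^ 3))) := by
      refine (Real.rpow_le_rpow hb0 hb1 hE0).trans ?_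
      rw [← Real.exp_mul, Real.exp_le_exp, neg_mul, neg_le_neg_iff]
      have : t ^ 4 / (32 * γ ^ 3) = (1 / γ * (t / s)) * (s * t ^ 3 / (32 * γ ^ 2)) := by
        field_simp
      rw [this]; gcongr
    have he : Real.exp (-(t ^ 4 / (32 * γ ^ 3))) ≤ (t ^ 4 / (32 * γ ^ 3))⁻¹ := by
      rw [Real.exp_neg]
      have := Real.add_one_le_exp (t ^ 4 / (32 * γ ^ 3))
      exact inv_anti₀ (by positivity) (by linarith)
    calc t ^ 2 * (1 - 1 / γ * (t / s)) ^ E ≤ t ^ 2 * (t ^ 4 / (32 * γ ^ 3))⁻¹ := by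
          gcongr; exact hp.trans he
      _ = _ := by field_simp
  exact tendsto_of_tendsto_of_tendsto_of_le_of_le' tendsto_const_nhds hlim
    (key.mono fun _ h => h.1) (key.mono fun _ h => h.2)
end

section
/- Define f(x) = (2 − e^{(1 − 1/x)·(1 − e^{−x/2})})·x for real x > 0, and set a = (1 − f(1/5))/0.8 and b = 1 − a. Then for all real x with 1/5 < x < 1, f(x) ≥ a·x + b. -/
open Real

noncomputable def fHC (x : ℝ) : ℝ :=
  (2 - Real.exp ((1 - 1 / x) * (1 - Real.exp (-x / 2)))) * x

theorem stmt_15 (a b : ℝ) (ha : a = (1 - fHC (1 / 5)) / 0.8) (hb : b = 1 - a) :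
    ∀ x : ℝ, 1 / 5 < x → x < 1 → fHC x ≥ a * x + b := by
  intro x h1 h2
  have hx : 0 < x := by linarith
  have hu : Real.exp (-x / 2) ≤ Real.exp (-(1/5) / 2) := Real.exp_le_exp.2 (by linarith)
  unfold fHC at *
  set u := Real.exp (-x / 2) with hud
  set v := Real.exp (-(1/5) / 2) with hvd
  set k : ℝ := (1 - 1 / (1 / 5)) * (1 - v) with hk
  have hw0 : 0 ≤ (1 - x) / (4 * x) := div_nonneg (by linarith) (by linarith)
  have hw1 : (1 - x) / (4 * x) ≤ 1 := by
    rw [div_le_one (by linarith)]; linarith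
  have hc := convexOn_exp.2 (Set.mem_univ k) (Set.mem_univ (0:ℝ)) hw0 (sub_nonneg.2 hw1)
    (by ring)
  simp only [smul_eq_mul, mul_zero, add_zero, Real.exp_zero, mul_one] at hc
  have hle : (1 - 1 / x) * (1 - u) ≤ (1 - x) / (4 * x) * k := by
    have e1 : (1 - 1 / x) * (1 - u) = (1 - x) / x * (u - 1) := by field_simp; ring
    have e2 : (1 - x) / (4 * x) * k = (1 - x) / x * (v - 1) := by
      rw [hk]; field_simp; ring
    rw [e1, e2]
    exact mul_le_mul_of_nonneg_left (by linarith) (div_nonneg (by linarith) hx.le)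
  have h3 := mul_le_mul_of_nonneg_right ((Real.exp_le_exp.2 hle).trans hc) hx.le
  have e3 : ((1 - x) / (4 * x) * Real.exp k + (1 - (1 - x) / (4 * x))) * x
      = (1 - x) / 4 * Real.exp k + x - (1 - x) / 4 := by
    field_simp
    ring
  rw [e3] at h3
  rw [hb, ha]
  norm_num at h3 ⊢
  linarith
end
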